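/- Let δ and n be integers with 1 ≤ δ < n, and set ξ_δ := Σ_{j=1}^{δ} C(2j-1, j). Then min(ξ_δ, C(n, δ-1)) equals ξ_δ if n ≥ 2δ, and equals C(n, δ-1) if n ≤ 2δ-1. -/

import Mathlib

/-!
Both cases reduce by monotonicity of `C(·, δ-1)` to the boundary values of `n`.

For `n ≤ 2δ-1`, `C(n, δ-1) ≤ C(2δ-1, δ-1) = C(2δ-1, δ)`, which is the last summand of `ξ_δ`.

For `n ≥ 2δ` it suffices that `ξ_δ ≤ C(2δ, δ-1)` (`sum_choose_le`). This goes by induction on `δ`: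
Pascal's rule and symmetry give `C(2δ+2, δ) = C(2δ+1, δ-1) + C(2δ+1, δ+1)`, where the second term is
the new summand of `ξ_{δ+1}` and the first is at least `C(2δ, δ-1)`.
-/

/-- The bound `ξ_δ ≤ C(2δ, δ-1)`, stated for `δ = k + 1`. -/
theorem sum_choose_le (k : ℕ) :
    ∑ j ∈ Finset.Icc 1 (k + 1), Nat.choose (2 * j - 1) j ≤ Nat.choose (2 * k + 2) k := by
  induction k with
  | zero => simp
  | succ k ih =>
    rw [Finset.sum_Icc_succ_top (by omega)]
    have new_term : Nat.choose (2 * (k + 1 + 1) - 1) (k + 1 + 1) = Nat.choose (2 * k + 3) (k + 1) :=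
      Nat.choose_symm_of_eq_add (by omega)
    have pascal : Nat.choose (2 * (k + 1) + 2) (k + 1) =
        Nat.choose (2 * k + 3) k + Nat.choose (2 * k + 3) (k + 1) :=
      Nat.choose_succ_succ (2 * k + 3) k
    have mono : Nat.choose (2 * k + 2) k ≤ Nat.choose (2 * k + 3) k :=
      Nat.choose_le_choose k (by omega)
    omega

/-- With `ξ_δ = ∑_{j=1}^δ C(2j-1, j)`, for `1 ≤ δ < n`:
`min(ξ_δ, C(n, δ-1))` equals `ξ_δ` if `n ≥ 2δ` and equals `C(n, δ-1)` if `n ≤ 2δ-1`. -/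
theorem stmt_1 (δ n : ℕ) (hδ : 1 ≤ δ) (hn : δ < n) :
    (2 * δ ≤ n →
      min (∑ j ∈ Finset.Icc 1 δ, Nat.choose (2 * j - 1) j) (Nat.choose n (δ - 1)) =
        ∑ j ∈ Finset.Icc 1 δ, Nat.choose (2 * j - 1) j) ∧
    (n ≤ 2 * δ - 1 →
      min (∑ j ∈ Finset.Icc 1 δ, Nat.choose (2 * j - 1) j) (Nat.choose n (δ - 1)) =
        Nat.choose n (δ - 1)) := by
  obtain ⟨k, rfl⟩ : ∃ k, δ = k + 1 := ⟨δ - 1, by omega⟩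
  rw [Nat.add_sub_cancel]
  refine ⟨fun h => min_eq_left ?_, fun h => min_eq_right ?_⟩
  · exact (sum_choose_le k).trans (Nat.choose_le_choose k (by omega))
  · calc Nat.choose n k ≤ Nat.choose (2 * (k + 1) - 1) k := Nat.choose_le_choose k h
      _ = Nat.choose (2 * (k + 1) - 1) (k + 1) := Nat.choose_symm_of_eq_add (by omega)
      _ ≤ ∑ j ∈ Finset.Icc 1 (k + 1), Nat.choose (2 * j - 1) j :=
        Finset.single_le_sum (f := fun j => Nat.choose (2 * j - 1) j)
          (fun _ _ => Nat.zero_le _) (Finset.mem_Icc.mpr ⟨hδ, le_rfl⟩)
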